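/- Let (η, α, U, A, φ, σ) be a solution of the Gowdy symmetric IIA system on (T₋,T₊) with 0 < T₋ < t_i < T₊ < ∞. If α̇/α is bounded on (T₋,T₊) × S¹, then the energy density 𝓔 is bounded on (T₋,T₊) × S¹. -/

import Mathlib

/-!
Write `∂_ξ = ∂ₜ + √α ∂_θ`, `∂_ζ = ∂ₜ - √α ∂_θ` and split `2𝓔 = F₊ + F₋`, where `F₊` and `F₋`
(`nullE` with `ε = 1` and `ε = -1`) are the sums of the weighted squares of the `ξ`- and of the
`ζ`-derivatives of `U, A, φ, σ`. The evolution equations give a transport equation for `∂_ζ F₊`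
(and symmetrically for `∂_ξ F₋`) in which all cubic terms cancel because of the wave map structure
of the pairs `(U, A)` and `(φ, σ)` (`nullE_deriv`). By the equation for `α`, the source term
`α Q² e^{2λφ+2(η-U)}` is `-α̇ / (t α)`, so once `α̇ / α` is bounded and `t ≥ T₋ > 0` one gets
`|∂_ζ F₊|, |∂_ξ F₋| ≤ L (1 + sup F)` (`rhs_bound`).

Instead of integrating along characteristics, the estimate is closed by a maximum principle
(`maximum_principle`): at a spatial maximum the `θ`-derivative vanishes, so the null derivative
there is the time derivative, and `F₊`, `F₋` can never reach a barrier `B e^{k(t - t_i)}` with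
`k = 2L + 1`. Since `T₊ < ∞`, this bounds both on `[t_i, T₊)`; reversing time handles `(T₋, t_i]`.
-/


noncomputable section

open Real Set MeasureTheory Filter

/-- Partial derivative in the first (time) variable. -/
def pt (f : ℝ → ℝ → ℝ) : ℝ → ℝ → ℝ := fun t θ => deriv (fun s => f s θ) t

/-- Partial derivative in the second (angle) variable. -/
def pth (f : ℝ → ℝ → ℝ) : ℝ → ℝ → ℝ := fun t θ => deriv (fun x => f t x) θ

/-- The full Gowdy symmetric IIA system (both constraints, the equation for `α`,
and the four evolution equations) holding at all times in `S` (dot = `pt`,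
prime = `pth`). -/
structure IsGowdyIIA (Q lam : ℝ) (S : Set ℝ) (η α U A φ σ : ℝ → ℝ → ℝ) : Prop where
  alpha_pos : ∀ t ∈ S, ∀ θ : ℝ, 0 < α t θ
  constraint_t : ∀ t ∈ S, ∀ θ : ℝ,
    pt η t θ / t =
      (pt U t θ) ^ 2 + α t θ * (pth U t θ) ^ 2
      + exp (4 * U t θ) / (4 * t ^ 2) * ((pt A t θ) ^ 2 + α t θ * (pth A t θ) ^ 2)
      + (1 / 4) * ((pt φ t θ) ^ 2 + α t θ * (pth φ t θ) ^ 2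
          + exp (2 * lam * φ t θ) * ((pt σ t θ) ^ 2 + α t θ * (pth σ t θ) ^ 2)
          + α t θ * Q ^ 2 * exp (2 * lam * φ t θ + 2 * (η t θ - U t θ)))
  constraint_θ : ∀ t ∈ S, ∀ θ : ℝ,
    pth η t θ / t =
      2 * pt U t θ * pth U t θ
      + exp (4 * U t θ) / (2 * t ^ 2) * (pt A t θ * pth A t θ)
      - pth α t θ / (2 * t * α t θ)
      + (1 / 2) * (pt φ t θ * pth φ t θ
          + exp (2 * lam * φ t θ) * (pt σ t θ * pth σ t θ))
  constraint_α : ∀ t ∈ S, ∀ θ : ℝ,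
    pt α t θ = - t * (α t θ) ^ 2 * Q ^ 2 * exp (2 * lam * φ t θ + 2 * (η t θ - U t θ))
  evol_U : ∀ t ∈ S, ∀ θ : ℝ,
    pt (pt U) t θ - α t θ * pth (pth U) t θ =
      - pt U t θ / t + pt α t θ * pt U t θ / (2 * α t θ) + pth α t θ * pth U t θ / 2
      + exp (4 * U t θ) / (2 * t ^ 2) * ((pt A t θ) ^ 2 - α t θ * (pth A t θ) ^ 2)
      + (1 / 4) * α t θ * Q ^ 2 * exp (2 * lam * φ t θ + 2 * (η t θ - U t θ))
  evol_A : ∀ t ∈ S, ∀ θ : ℝ,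
    pt (pt A) t θ - α t θ * pth (pth A) t θ =
      pt A t θ / t + pt α t θ * pt A t θ / (2 * α t θ) + pth α t θ * pth A t θ / 2
      - 4 * (pt A t θ * pt U t θ - α t θ * pth A t θ * pth U t θ)
  evol_φ : ∀ t ∈ S, ∀ θ : ℝ,
    pt (pt φ) t θ - α t θ * pth (pth φ) t θ =
      - pt φ t θ / t + pt α t θ * pt φ t θ / (2 * α t θ) + pth α t θ * pth φ t θ / 2
      + lam * exp (2 * lam * φ t θ) * ((pt σ t θ) ^ 2 - α t θ * (pth σ t θ) ^ 2)
      - lam * α t θ * Q ^ 2 * exp (2 * lam * φ t θ + 2 * (η t θ - U t θ))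
  evol_σ : ∀ t ∈ S, ∀ θ : ℝ,
    pt (pt σ) t θ - α t θ * pth (pth σ) t θ =
      - pt σ t θ / t + pt α t θ * pt σ t θ / (2 * α t θ) + pth α t θ * pth σ t θ / 2
      - 2 * lam * (pt φ t θ * pt σ t θ - α t θ * pth φ t θ * pth σ t θ)

/-- A smooth, spatially `2π`-periodic solution of the Gowdy symmetric IIA system
on the areal time interval `(Tm, Tp)`. -/
structure GowdySolution (Q lam Tm Tp : ℝ) where
  η : ℝ → ℝ → ℝ
  α : ℝ → ℝ → ℝ
  U : ℝ → ℝ → ℝ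
  A : ℝ → ℝ → ℝ
  φ : ℝ → ℝ → ℝ
  σ : ℝ → ℝ → ℝ
  smooth : ∀ f ∈ ([η, α, U, A, φ, σ] : List (ℝ → ℝ → ℝ)),
    ContDiffOn ℝ (⊤ : ℕ∞) (fun p : ℝ × ℝ => f p.1 p.2) (Ioo Tm Tp ×ˢ (univ : Set ℝ))
  periodic : ∀ f ∈ ([η, α, U, A, φ, σ] : List (ℝ → ℝ → ℝ)), ∀ t θ : ℝ,
    f t (θ + 2 * π) = f t θ
  sys : IsGowdyIIA Q lam (Ioo Tm Tp) η α U A φ σ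

/-- The energy density `𝓔`. -/
def calE (lam : ℝ) (α U A φ σ : ℝ → ℝ → ℝ) (t θ : ℝ) : ℝ :=
  (pt U t θ) ^ 2 + α t θ * (pth U t θ) ^ 2
  + exp (4 * U t θ) / (4 * t ^ 2) * ((pt A t θ) ^ 2 + α t θ * (pth A t θ) ^ 2)
  + (1 / 4) * ((pt φ t θ) ^ 2 + α t θ * (pth φ t θ) ^ 2
      + exp (2 * lam * φ t θ) * ((pt σ t θ) ^ 2 + α t θ * (pth σ t θ) ^ 2))

/-- The energy `E(t)` (integral over the circle `S¹ = [0, 2π]`). -/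
def energyE (Q lam : ℝ) (η α U A φ σ : ℝ → ℝ → ℝ) (t : ℝ) : ℝ :=
  ∫ θ in Ioc (0 : ℝ) (2 * π),
    (1 / Real.sqrt (α t θ)) *
      (calE lam α U A φ σ t θ
        + (1 / 4) * α t θ * Q ^ 2 * exp (2 * (η t θ + lam * φ t θ - U t θ)))

/-- The energy `Ẽ(t)`. -/
def energyEt (lam : ℝ) (α U A φ σ : ℝ → ℝ → ℝ) (t : ℝ) : ℝ :=
  ∫ θ in Ioc (0 : ℝ) (2 * π), calE lam α U A φ σ t θ / Real.sqrt (α t θ)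

/-- The timelike convergence condition (TCC) for the Gowdy symmetric IIA system. -/
def TCC (Q lam Tm Tp : ℝ) (η α U φ σ : ℝ → ℝ → ℝ) : Prop :=
  ∀ t ∈ Ioo Tm Tp, ∀ θ : ℝ,
    (pt φ t θ) ^ 2 + exp (2 * lam * φ t θ) * (pt σ t θ) ^ 2
      ≥ (1 / 2) * α t θ * Q ^ 2 * exp (2 * (η t θ + lam * φ t θ - U t θ))

/-! ### A maximum principle -/

/-- Finitely many functions, periodic in `θ`, whose time derivative at a joint spatial maximum of
value `M` is at most `L (1 + M)`, stay bounded on a bounded time interval. -/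
theorem maximum_principle {ι : Type*} [Finite ι] (F : ι → ℝ → ℝ → ℝ) {a b L : ℝ}
    (hL : 0 ≤ L)
    (hcont : ∀ i, ContinuousOn (fun p : ℝ × ℝ => F i p.1 p.2) (Ico a b ×ˢ univ))
    (hper : ∀ i t, Function.Periodic (F i t) (2 * π))
    (hder : ∀ i, ∀ t ∈ Ioo a b, ∀ θ M, (∀ j θ', F j t θ' ≤ M) → F i t θ = M →
      ∃ d, HasDerivAt (fun s => F i s θ) d t ∧ d ≤ L * (1 + M)) :
    ∃ C, ∀ i, ∀ t ∈ Ico a b, ∀ θ, F i t θ ≤ C := by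
  rcases le_or_gt b a with hab | hab
  · exact ⟨0, fun i t ht => absurd (ht.1.trans_lt ht.2) (not_lt.2 hab)⟩
  have hslice : ∀ i θ, ContinuousOn (fun s => F i s θ) (Ico a b) := fun i θ =>
    (hcont i).comp (f := fun s : ℝ => (s, θ)) (by fun_prop) (fun s hs => ⟨hs, mem_univ _⟩)
  have hinit : ∃ B : ℝ, 1 ≤ B ∧ ∀ i θ, F i a θ < B := by
    have h1 : ∀ i, ∃ B, ∀ θ, F i a θ ≤ B := by
      intro i
      have hc : ContinuousOn (fun θ => F i a θ) (Icc 0 (2 * π)) :=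
        (hcont i).comp (f := fun x : ℝ => (a, x)) (by fun_prop)
          (fun s _ => ⟨⟨le_rfl, hab⟩, mem_univ _⟩)
      obtain ⟨B, hB⟩ := (isCompact_Icc.image_of_continuousOn hc).bddAbove
      refine ⟨B, fun θ => ?_⟩
      obtain ⟨y, hy, hy'⟩ := (hper i a).exists_mem_Ico₀ (by positivity) θ
      rw [hy']
      exact hB ⟨y, Ico_subset_Icc_self hy, rfl⟩
    choose B hB using h1
    obtain ⟨B', hB'⟩ := (Set.finite_range B).bddAbove
    refine ⟨max 1 (B' + 1), le_max_left _ _, fun i θ => ?_⟩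
    have := hB i θ
    have := hB' ⟨i, rfl⟩
    have := le_max_right 1 (B' + 1)
    linarith
  obtain ⟨B, hB1, hB⟩ := hinit
  -- the barrier `g`: as `g ≥ 1`, it satisfies `g' = (2L + 1) g > L (1 + g)`
  set k := 2 * L + 1 with hk
  set g : ℝ → ℝ := fun t => B * exp (k * (t - a)) with hg
  have hgc : Continuous g := by fun_prop
  have hgd : ∀ t, HasDerivAt g (k * g t) t := by
    intro t
    have := ((((hasDerivAt_id t).sub_const a).const_mul k).exp).const_mul B
    refine this.congr_deriv ?_
    change B * (exp (k * (t - a)) * (k * 1)) = k * (B * exp (k * (t - a)))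
    ring
  have hg1 : ∀ t, a ≤ t → 1 ≤ g t := by
    intro t ht
    have : 1 ≤ exp (k * (t - a)) := one_le_exp (mul_nonneg (by positivity) (by linarith))
    exact one_le_mul_of_one_le_of_one_le hB1 this
  have key : ∀ i, ∀ t ∈ Ico a b, ∀ θ, F i t θ < g t := by
    by_contra! hcon
    obtain ⟨i₁, t₁, ht₁, θ₁, h₁⟩ := hcon
    -- the compact set of points up to time `t₁` where the barrier is violated
    let K : ι → Set (ℝ × ℝ) := fun i =>
      {p ∈ Icc a t₁ ×ˢ Icc 0 (2 * π) | g p.1 ≤ F i p.1 p.2}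
    have hKmem : ∀ i p, p ∈ K i ↔ p ∈ Icc a t₁ ×ˢ Icc 0 (2 * π) ∧ g p.1 ≤ F i p.1 p.2 := by
      intro i p; rfl
    have hKc : ∀ i, IsCompact (K i) := by
      intro i
      have hcl : IsClosed (K i) := by
        refine IsClosed.isClosed_le (isClosed_Icc.prod isClosed_Icc)
          (by fun_prop) ((hcont i).mono ?_)
        exact prod_mono (fun s hs => ⟨hs.1, hs.2.trans_lt ht₁.2⟩) (subset_univ _)
      exact (isCompact_Icc.prod isCompact_Icc).of_isClosed_subset hcl (fun p hp => hp.1)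
    have hmove : ∀ i t θ, t ∈ Icc a t₁ → g t ≤ F i t θ → ∃ y, (t, y) ∈ K i := by
      intro i t θ ht h
      obtain ⟨y, hy, hy'⟩ := (hper i t).exists_mem_Ico₀ (by positivity) θ
      exact ⟨y, (hKmem _ _).2 ⟨⟨ht, Ico_subset_Icc_self hy⟩, by simpa [← hy'] using h⟩⟩
    have hne : (⋃ i, K i).Nonempty := by
      obtain ⟨y, hy⟩ := hmove i₁ t₁ θ₁ ⟨ht₁.1, le_rfl⟩ h₁
      exact ⟨_, mem_iUnion.2 ⟨i₁, hy⟩⟩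
    -- `t₀` is the first time at which the barrier is touched
    obtain ⟨⟨t₀, θ₀⟩, hp, hmin⟩ := (isCompact_iUnion hKc).exists_isMinOn hne
      (f := Prod.fst) (by fun_prop)
    obtain ⟨i, hi⟩ := mem_iUnion.1 hp
    obtain ⟨⟨ht₀, -⟩, hge⟩ := (hKmem _ _).1 hi
    simp only at ht₀ hge
    have hlt : ∀ j θ, ∀ s ∈ Ico a t₀, F j s θ < g s := by
      intro j θ s hs
      by_contra! h
      obtain ⟨y, hy⟩ := hmove j s θ ⟨hs.1, hs.2.le.trans ht₀.2⟩ h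
      have := hmin (mem_iUnion.2 ⟨j, hy⟩)
      simp only [mem_ofPred_eq] at this
      linarith [hs.2]
    have hat : a < t₀ := by
      rcases ht₀.1.eq_or_lt with h | h
      · subst h
        have := hB i θ₀
        simp [hg] at hge
        linarith
      · exact h
    have htb : t₀ < b := ht₀.2.trans_lt ht₁.2
    have hle : ∀ j θ, F j t₀ θ ≤ g t₀ := by
      intro j θ
      refine ContinuousWithinAt.closure_le (s := Ico a t₀) (f := fun s => F j s θ) (g := g) ?_
        (((hslice j θ) t₀ ⟨hat.le, htb⟩).mono (Ico_subset_Ico_right htb.le))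
        hgc.continuousWithinAt (fun s hs => (hlt j θ s hs).le)
      rw [closure_Ico hat.ne]; exact ⟨hat.le, le_rfl⟩
    have heq : F i t₀ θ₀ = g t₀ := le_antisymm (hle _ _) hge
    obtain ⟨d, hd, hdle⟩ := hder i t₀ ⟨hat, htb⟩ θ₀ (g t₀) hle heq
    -- `F i · θ₀ - g` is negative before `t₀` and vanishes there, so its derivative is nonnegative
    have hsub := (hd.sub (hgd t₀)).hasDerivWithinAt (s := Iio t₀)
    rw [hasDerivWithinAt_iff_tendsto_slope' (by simp)] at hsub
    have hnn : 0 ≤ d - k * g t₀ := by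
      refine ge_of_tendsto hsub ?_
      filter_upwards [Ioo_mem_nhdsLT hat] with s hs
      have := hlt i θ₀ s ⟨hs.1.le, hs.2⟩
      rw [slope_def_field]
      refine div_nonneg_of_nonpos ?_ (by linarith [hs.2])
      simp only [Pi.sub_apply]
      linarith
    have h1 := hg1 t₀ hat.le
    nlinarith [mul_nonneg hL (sub_nonneg.2 h1)]
  refine ⟨B * exp (k * (b - a)), fun i t ht θ => (key i t ht θ).le.trans ?_⟩
  simp only [hg]
  have : k * (t - a) ≤ k * (b - a) := mul_le_mul_of_nonneg_left (by linarith [ht.2]) (by positivity)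
  gcongr

/-! ### Partial derivatives of smooth functions on the slab -/

/-- Joint smoothness on the slab `(Tm, Tp) × ℝ`. -/
def SmoothOn (Tm Tp : ℝ) (f : ℝ → ℝ → ℝ) : Prop :=
  ContDiffOn ℝ (⊤ : ℕ∞) (fun p : ℝ × ℝ => f p.1 p.2) (Ioo Tm Tp ×ˢ (univ : Set ℝ))

section Slab

variable {Tm Tp : ℝ} {f : ℝ → ℝ → ℝ}

theorem isOpen_slab (Tm Tp : ℝ) : IsOpen (Ioo Tm Tp ×ˢ (univ : Set ℝ)) :=
  isOpen_Ioo.prod isOpen_univ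

theorem SmoothOn.hasFDerivAt (hf : SmoothOn Tm Tp f) {t : ℝ} (ht : t ∈ Ioo Tm Tp) (θ : ℝ) :
    HasFDerivAt (fun p : ℝ × ℝ => f p.1 p.2) (fderiv ℝ (fun p : ℝ × ℝ => f p.1 p.2) (t, θ))
      (t, θ) :=
  ((hf.contDiffAt ((isOpen_slab Tm Tp).mem_nhds ⟨ht, mem_univ _⟩)).differentiableAt
    (by simp)).hasFDerivAt

theorem SmoothOn.hasDerivAt_fst_aux (hf : SmoothOn Tm Tp f) {t : ℝ} (ht : t ∈ Ioo Tm Tp)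
    (θ : ℝ) :
    HasDerivAt (fun s => f s θ) (fderiv ℝ (fun p : ℝ × ℝ => f p.1 p.2) (t, θ) (1, 0)) t :=
  (hf.hasFDerivAt ht θ).comp_hasDerivAt (f := fun s : ℝ => (s, θ)) t
    ((hasDerivAt_id t).prodMk (hasDerivAt_const t θ))

theorem SmoothOn.hasDerivAt_snd_aux (hf : SmoothOn Tm Tp f) {t : ℝ} (ht : t ∈ Ioo Tm Tp)
    (θ : ℝ) :
    HasDerivAt (fun x => f t x) (fderiv ℝ (fun p : ℝ × ℝ => f p.1 p.2) (t, θ) (0, 1)) θ :=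
  (hf.hasFDerivAt ht θ).comp_hasDerivAt (f := fun x : ℝ => (t, x)) θ
    ((hasDerivAt_const θ t).prodMk (hasDerivAt_id θ))

theorem SmoothOn.pt_eq (hf : SmoothOn Tm Tp f) {t : ℝ} (ht : t ∈ Ioo Tm Tp) (θ : ℝ) :
    pt f t θ = fderiv ℝ (fun p : ℝ × ℝ => f p.1 p.2) (t, θ) (1, 0) :=
  (hf.hasDerivAt_fst_aux ht θ).deriv

theorem SmoothOn.pth_eq (hf : SmoothOn Tm Tp f) {t : ℝ} (ht : t ∈ Ioo Tm Tp) (θ : ℝ) :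
    pth f t θ = fderiv ℝ (fun p : ℝ × ℝ => f p.1 p.2) (t, θ) (0, 1) :=
  (hf.hasDerivAt_snd_aux ht θ).deriv

theorem SmoothOn.hasDerivAt_fst (hf : SmoothOn Tm Tp f) {t : ℝ} (ht : t ∈ Ioo Tm Tp) (θ : ℝ) :
    HasDerivAt (fun s => f s θ) (pt f t θ) t := by
  rw [hf.pt_eq ht]; exact hf.hasDerivAt_fst_aux ht θ

theorem SmoothOn.hasDerivAt_snd (hf : SmoothOn Tm Tp f) {t : ℝ} (ht : t ∈ Ioo Tm Tp) (θ : ℝ) :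
    HasDerivAt (fun x => f t x) (pth f t θ) θ := by
  rw [hf.pth_eq ht]; exact hf.hasDerivAt_snd_aux ht θ

theorem SmoothOn.fderiv_apply (hf : SmoothOn Tm Tp f) (v : ℝ × ℝ) :
    ContDiffOn ℝ (⊤ : ℕ∞) (fun p => fderiv ℝ (fun p : ℝ × ℝ => f p.1 p.2) p v)
      (Ioo Tm Tp ×ˢ (univ : Set ℝ)) :=
  (hf.fderiv_of_isOpen (isOpen_slab Tm Tp) (by simp)).clm_apply contDiffOn_const

theorem SmoothOn.pt (hf : SmoothOn Tm Tp f) : SmoothOn Tm Tp (pt f) :=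
  (hf.fderiv_apply (1, 0)).congr fun p hp => hf.pt_eq hp.1 p.2

theorem SmoothOn.pth (hf : SmoothOn Tm Tp f) : SmoothOn Tm Tp (pth f) :=
  (hf.fderiv_apply (0, 1)).congr fun p hp => hf.pth_eq hp.1 p.2

/-- Mixed partial derivatives commute. -/
theorem SmoothOn.pt_pth (hf : SmoothOn Tm Tp f) {t : ℝ} (ht : t ∈ Ioo Tm Tp) (θ : ℝ) :
    _root_.pt (_root_.pth f) t θ = _root_.pth (_root_.pt f) t θ := by
  have hnhds := (isOpen_slab Tm Tp).mem_nhds (x := (t, θ)) ⟨ht, mem_univ _⟩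
  have hfd : DifferentiableAt ℝ (fderiv ℝ (fun p : ℝ × ℝ => f p.1 p.2)) (t, θ) :=
    ((hf.fderiv_of_isOpen (isOpen_slab Tm Tp) (m := (⊤ : ℕ∞)) (by simp)).contDiffAt
      hnhds).differentiableAt (by simp)
  have hval : ∀ v w : ℝ × ℝ, fderiv ℝ (fun p => fderiv ℝ (fun p : ℝ × ℝ => f p.1 p.2) p v) (t, θ) w
      = fderiv ℝ (fderiv ℝ (fun p : ℝ × ℝ => f p.1 p.2)) (t, θ) w v := by
    intro v w
    rw [fderiv_clm_apply hfd (differentiableAt_const v)]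
    simp
  have hsymm := (hf.contDiffAt hnhds).isSymmSndFDerivAt
    (by rw [minSmoothness_of_isRCLikeNormedField]; exact WithTop.coe_le_coe.2 (le_top : (2 : ℕ∞) ≤ ⊤))
  have e1 : (fun p : ℝ × ℝ => _root_.pth f p.1 p.2) =ᶠ[nhds (t, θ)]
      fun p => fderiv ℝ (fun p : ℝ × ℝ => f p.1 p.2) p (0, 1) := by
    filter_upwards [hnhds] with p hp using hf.pth_eq hp.1 p.2
  have e2 : (fun p : ℝ × ℝ => _root_.pt f p.1 p.2) =ᶠ[nhds (t, θ)]
      fun p => fderiv ℝ (fun p : ℝ × ℝ => f p.1 p.2) p (1, 0) := by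
    filter_upwards [hnhds] with p hp using hf.pt_eq hp.1 p.2
  rw [hf.pth.pt_eq ht, hf.pt.pth_eq ht, e1.fderiv_eq, e2.fderiv_eq, hval, hval]
  exact hsymm _ _

end Slab

theorem periodic_pt {f : ℝ → ℝ → ℝ} (h : ∀ t θ, f t (θ + 2 * π) = f t θ) (t θ : ℝ) :
    pt f t (θ + 2 * π) = pt f t θ := by
  simp only [pt, h]

theorem periodic_pth {f : ℝ → ℝ → ℝ} (h : ∀ t θ, f t (θ + 2 * π) = f t θ) (t θ : ℝ) :
    pth f t (θ + 2 * π) = pth f t θ := by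
  simp only [pth]
  rw [← deriv_comp_add_const (fun x => f t x)]
  simp only [h]

/-! ### Null derivatives and null energies -/

/-- The derivative `∂ₜf + ε √α ∂_θ f`; it is `∂_ξ f` for `ε = 1` and `∂_ζ f` for `ε = -1`. -/
def nullDer (ε : ℝ) (α f : ℝ → ℝ → ℝ) (t θ : ℝ) : ℝ :=
  pt f t θ + ε * √(α t θ) * pth f t θ

/-- The part of `2𝓔` built from the null derivatives in direction `∂ₜ + ε √α ∂_θ`. -/
def nullE (lam ε : ℝ) (α U A φ σ : ℝ → ℝ → ℝ) (t θ : ℝ) : ℝ :=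
  nullDer ε α U t θ ^ 2 + exp (4 * U t θ) / (4 * t ^ 2) * nullDer ε α A t θ ^ 2
    + (1 / 4) * (nullDer ε α φ t θ ^ 2 + exp (2 * lam * φ t θ) * nullDer ε α σ t θ ^ 2)

theorem calE_eq (lam : ℝ) (α U A φ σ : ℝ → ℝ → ℝ) (t θ : ℝ) (hα : 0 < α t θ) :
    2 * calE lam α U A φ σ t θ = nullE lam 1 α U A φ σ t θ + nullE lam (-1) α U A φ σ t θ := by
  have h := Real.sq_sqrt hα.le
  simp only [calE, nullE, nullDer]
  rw [← h, Real.sqrt_sq (Real.sqrt_nonneg _)]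
  ring

/-- Applying the transversal null derivative `∂ₜ - ε √α ∂_θ` to `nullDer ε α f` produces the wave
operator `f̈ - α f''` plus first-order terms. -/
theorem nullDer_deriv {Tm Tp ε : ℝ} {α f : ℝ → ℝ → ℝ} (hε : ε ^ 2 = 1)
    (hα : SmoothOn Tm Tp α) (hf : SmoothOn Tm Tp f) {t : ℝ} (ht : t ∈ Ioo Tm Tp) (θ : ℝ)
    (hpos : 0 < α t θ) :
    ∃ d₁ d₂, HasDerivAt (fun s => nullDer ε α f s θ) d₁ t ∧
      HasDerivAt (fun x => nullDer ε α f t x) d₂ θ ∧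
      d₁ - ε * √(α t θ) * d₂ = pt (pt f) t θ - α t θ * pth (pth f) t θ
        + pt α t θ / α t θ / 2 * (ε * √(α t θ) * pth f t θ) - pth α t θ * pth f t θ / 2 := by
  have h1 := (hf.pt.hasDerivAt_fst ht θ).add
    ((((hα.hasDerivAt_fst ht θ).sqrt hpos.ne').const_mul ε).mul (hf.pth.hasDerivAt_fst ht θ))
  have h2 := (hf.pt.hasDerivAt_snd ht θ).add
    ((((hα.hasDerivAt_snd ht θ).sqrt hpos.ne').const_mul ε).mul (hf.pth.hasDerivAt_snd ht θ))
  refine ⟨_, _, h1, h2, ?_⟩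
  rw [hf.pt_pth ht θ]
  have hs : 0 < √(α t θ) := Real.sqrt_pos.2 hpos
  have hsq := Real.sq_sqrt hpos.le
  set s := √(α t θ) with hsdef
  rw [← hsq]
  field_simp
  have : ε ^ 2 - 1 = 0 := by linarith
  linear_combination s * (-(2 * s ^ 2 * pth (pth f) t θ) - pth α t θ * pth f t θ) * this

/-- The transport equation for `nullE`: the contributions of the quadratic terms in the wave
equations for `U`, `A` and for `φ`, `σ` cancel (the wave map structure), so the right-hand side is at most quadratic in
the null derivatives. -/
theorem nullE_deriv {Q lam Tm Tp ε : ℝ} {η α U A φ σ : ℝ → ℝ → ℝ} (hε : ε ^ 2 = 1)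
    (hTm : 0 < Tm) (hα : SmoothOn Tm Tp α) (hU : SmoothOn Tm Tp U) (hA : SmoothOn Tm Tp A)
    (hφ : SmoothOn Tm Tp φ) (hσ : SmoothOn Tm Tp σ)
    (hsys : IsGowdyIIA Q lam (Ioo Tm Tp) η α U A φ σ) {t : ℝ} (ht : t ∈ Ioo Tm Tp) (θ : ℝ) :
    ∃ D₁ D₂, HasDerivAt (fun s => nullE lam ε α U A φ σ s θ) D₁ t ∧
      HasDerivAt (fun x => nullE lam ε α U A φ σ t x) D₂ θ ∧
      D₁ - ε * √(α t θ) * D₂ = pt α t θ / α t θ * nullE lam ε α U A φ σ t θ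
        + (1 / t) * (-(nullDer ε α U t θ * (nullDer ε α U t θ + nullDer (-ε) α U t θ))
          + exp (4 * U t θ) / (4 * t ^ 2) *
            (nullDer ε α A t θ * (nullDer (-ε) α A t θ - nullDer ε α A t θ))
          - (1 / 4) * (nullDer ε α φ t θ * (nullDer ε α φ t θ + nullDer (-ε) α φ t θ))
          - (1 / 4) * exp (2 * lam * φ t θ) *
            (nullDer ε α σ t θ * (nullDer ε α σ t θ + nullDer (-ε) α σ t θ)))
        - pt α t θ / α t θ / t / 2 * (nullDer ε α U t θ - lam * nullDer ε α φ t θ) := by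
  have hpos := hsys.alpha_pos t ht θ
  have ht0 : 0 < t := hTm.trans ht.1
  obtain ⟨u₁, u₂, hu₁, hu₂, hu⟩ := nullDer_deriv hε hα hU ht θ hpos
  obtain ⟨a₁, a₂, ha₁, ha₂, ha⟩ := nullDer_deriv hε hα hA ht θ hpos
  obtain ⟨f₁, f₂, hf₁, hf₂, hf⟩ := nullDer_deriv hε hα hφ ht θ hpos
  obtain ⟨s₁, s₂, hs₁, hs₂, hs⟩ := nullDer_deriv hε hα hσ ht θ hpos
  have hE₁ := (((hU.hasDerivAt_fst ht θ).const_mul 4).exp).div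
    (((hasDerivAt_id t).pow 2).const_mul 4) (by simp only [id, Pi.pow_apply]; positivity)
  have hE₂ := (((hU.hasDerivAt_snd ht θ).const_mul 4).exp).div_const (4 * t ^ 2)
  have hX₁ := ((hφ.hasDerivAt_fst ht θ).const_mul (2 * lam)).exp
  have hX₂ := ((hφ.hasDerivAt_snd ht θ).const_mul (2 * lam)).exp
  have H₁ := ((hu₁.pow 2).add (hE₁.mul (ha₁.pow 2))).add
    (((hf₁.pow 2).add (hX₁.mul (hs₁.pow 2))).const_mul (1 / 4))
  have H₂ := ((hu₂.pow 2).add (hE₂.mul (ha₂.pow 2))).add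
    (((hf₂.pow 2).add (hX₂.mul (hs₂.pow 2))).const_mul (1 / 4))
  refine ⟨_, _, H₁, H₂, ?_⟩
  -- the `Q`-term equals `-α̇ / (t α)`
  have hK : α t θ * Q ^ 2 * exp (2 * lam * φ t θ + 2 * (η t θ - U t θ))
      = -(pt α t θ / α t θ) / t := by
    rw [hsys.constraint_α t ht θ]; field_simp
  have eU := hsys.evol_U t ht θ
  have eA := hsys.evol_A t ht θ
  have eφ := hsys.evol_φ t ht θ
  have eσ := hsys.evol_σ t ht θ
  have hdiv : ∀ y, pt α t θ * y / (2 * α t θ) = pt α t θ / α t θ / 2 * y := by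
    intro y; field_simp
  have hb : (ε * √(α t θ)) ^ 2 = α t θ := by rw [mul_pow, hε, Real.sq_sqrt hpos.le, one_mul]
  simp only [hdiv] at eU eA eφ eσ
  rw [mul_assoc (1 / 4), mul_assoc (1 / 4), hK] at eU
  rw [mul_assoc lam (α t θ), mul_assoc lam (α t θ * Q ^ 2), hK] at eφ
  rw [eU] at hu
  rw [eA] at ha
  rw [eφ] at hf
  rw [eσ] at hs
  have hEt : exp (4 * U t θ) / (2 * t ^ 2) = 2 * (exp (4 * U t θ) / (4 * t ^ 2)) := by
    field_simp; norm_num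
  rw [hEt] at hu
  simp only [nullE, nullDer, id, Pi.pow_apply, Pi.div_apply, neg_mul] at *
  generalize hq : pt α t θ / α t θ = q at *
  generalize hbb : ε * √(α t θ) = b at *
  rw [← hb] at hu ha hf hs
  have hu' := eq_add_of_sub_eq hu
  have ha' := eq_add_of_sub_eq ha
  have hf' := eq_add_of_sub_eq hf
  have hs' := eq_add_of_sub_eq hs
  subst hu' ha' hf' hs'
  generalize pt U t θ = Ut at *
  generalize pth U t θ = Ux at *
  generalize pt A t θ = At at *
  generalize pth A t θ = Ax at *
  generalize pt φ t θ = Ft at *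
  generalize pth φ t θ = Fx at *
  generalize pt σ t θ = St at *
  generalize pth σ t θ = Sx at *
  clear * - ht0
  field_simp
  ring

/-- The right-hand side of `nullE_deriv` is controlled by an upper bound `M` for the two null
energies. The four pairs of null derivatives are `u v`, `a c`, `f g`, `s r`; the weights are
`E` and `X`. -/
theorem rhs_bound {C T lam M t q u v a c f g s r E X : ℝ} (hT : 0 < T) (hTt : T ≤ t)
    (hq : |q| ≤ C) (hE : 0 ≤ E) (hX : 0 ≤ X)
    (hp : u ^ 2 + E * a ^ 2 + (1 / 4) * (f ^ 2 + X * s ^ 2) ≤ M)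
    (hm : v ^ 2 + E * c ^ 2 + (1 / 4) * (g ^ 2 + X * r ^ 2) ≤ M) :
    |q * (u ^ 2 + E * a ^ 2 + (1 / 4) * (f ^ 2 + X * s ^ 2))
        + (1 / t) * (-(u * (u + v)) + E * (a * (c - a)) - (1 / 4) * (f * (f + g))
          - (1 / 4) * X * (s * (s + r)))
        - q / t / 2 * (u - lam * f)| ≤ (C + 2 / T + C / T / 2 * (1 + |lam|)) * (1 + M) := by
  have ht : 0 < t := hT.trans_le hTt
  have hC : 0 ≤ C := (abs_nonneg q).trans hq
  have hP0 : 0 ≤ u ^ 2 + E * a ^ 2 + (1 / 4) * (f ^ 2 + X * s ^ 2) := by positivity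
  have hM : 0 ≤ M := hP0.trans hp
  have hit : 1 / t ≤ 1 / T := one_div_le_one_div_of_le hT hTt
  have h1 : |q * (u ^ 2 + E * a ^ 2 + (1 / 4) * (f ^ 2 + X * s ^ 2))| ≤ C * M := by
    rw [abs_mul, abs_of_nonneg hP0]
    exact mul_le_mul hq hp hP0 hC
  have h2 : |(1 / t) * (-(u * (u + v)) + E * (a * (c - a)) - (1 / 4) * (f * (f + g))
          - (1 / 4) * X * (s * (s + r)))| ≤ 1 / T * (2 * M) := by
    rw [abs_mul, abs_of_pos (one_div_pos.2 ht)]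
    refine mul_le_mul hit ?_ (abs_nonneg _) (by positivity)
    have e1 := mul_nonneg hE (sq_nonneg (a - c))
    have e2 := mul_nonneg hE (sq_nonneg (a + c))
    have e3 := mul_nonneg hX (sq_nonneg (s - r))
    have e4 := mul_nonneg hX (sq_nonneg (s + r))
    have e5 := mul_nonneg hE (sq_nonneg a)
    have e6 := mul_nonneg hX (sq_nonneg s)
    have e7 := mul_nonneg hE (sq_nonneg c)
    have e8 := mul_nonneg hX (sq_nonneg r)
    rw [abs_le]
    constructor <;> nlinarith [sq_nonneg (u - v), sq_nonneg (u + v), sq_nonneg (f - g),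
      sq_nonneg (f + g), sq_nonneg u, sq_nonneg f, sq_nonneg v, sq_nonneg g]
  have h3 : |q / t / 2 * (u - lam * f)| ≤ C / T / 2 * ((1 + |lam|) * (1 + M)) := by
    have e5 := mul_nonneg hE (sq_nonneg a)
    have e6 := mul_nonneg hX (sq_nonneg s)
    have hu : |u| ≤ 1 + M := by
      rw [abs_le]; constructor <;> nlinarith [sq_nonneg (u - 1), sq_nonneg (u + 1), sq_nonneg f]
    have hf : |f| ≤ 1 + M := by
      rw [abs_le]; constructor <;> nlinarith [sq_nonneg (f - 2), sq_nonneg (f + 2), sq_nonneg u]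
    rw [abs_mul, abs_div, abs_div, abs_of_pos ht, abs_two]
    refine mul_le_mul ?_ ?_ (abs_nonneg _) (by positivity)
    · gcongr
    · calc |u - lam * f| ≤ |u| + |lam * f| := abs_sub _ _
        _ = |u| + |lam| * |f| := by rw [abs_mul]
        _ ≤ (1 + M) + |lam| * (1 + M) := by gcongr
        _ = (1 + |lam|) * (1 + M) := by ring
  have hT' : 0 ≤ 1 / T := by positivity
  calc _ ≤ C * M + 1 / T * (2 * M) + C / T / 2 * ((1 + |lam|) * (1 + M)) :=
        (abs_sub _ _).trans (add_le_add ((abs_add_le _ _).trans (add_le_add h1 h2)) h3)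
    _ ≤ C * (1 + M) + 1 / T * (2 * (1 + M)) + C / T / 2 * ((1 + |lam|) * (1 + M)) := by
        gcongr <;> linarith
    _ = _ := by ring

/-! ### The light-cone estimate -/

theorem light_cone_estimate (Q lam Tm Tp t_i : ℝ) (hQ : Q ≠ 0) (hTm : 0 < Tm) (hti : Tm < t_i)
    (hTp : t_i < Tp) (G : GowdySolution Q lam Tm Tp)
    (hbd : ∃ C : ℝ, ∀ t ∈ Ioo Tm Tp, ∀ θ : ℝ, |pt G.α t θ / G.α t θ| ≤ C) :
    ∃ C : ℝ, ∀ t ∈ Ioo Tm Tp, ∀ θ : ℝ, |calE lam G.α G.U G.A G.φ G.σ t θ| ≤ C := by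

  obtain ⟨C, hC⟩ := hbd
  have hα : SmoothOn Tm Tp G.α := G.smooth _ (by simp)
  have hU : SmoothOn Tm Tp G.U := G.smooth _ (by simp)
  have hA : SmoothOn Tm Tp G.A := G.smooth _ (by simp)
  have hφ : SmoothOn Tm Tp G.φ := G.smooth _ (by simp)
  have hσ : SmoothOn Tm Tp G.σ := G.smooth _ (by simp)
  have pα := G.periodic G.α (by simp)
  have pU := G.periodic G.U (by simp)
  have pA := G.periodic G.A (by simp)
  have pφ := G.periodic G.φ (by simp)
  have pσ := G.periodic G.σ (by simp)
  let ε : Bool → ℝ := fun i => if i then 1 else -1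
  have hε : ∀ i, ε i ^ 2 = 1 := by intro i; cases i <;> simp [ε]
  have hεneg : ∀ i, -ε i = ε (!i) := by intro i; cases i <;> simp [ε]
  let F : Bool → ℝ → ℝ → ℝ := fun i => nullE lam (ε i) G.α G.U G.A G.φ G.σ
  have hnn : ∀ i t θ, 0 ≤ F i t θ := by
    intro i t θ; simp only [F, nullE]; positivity
  have hcont : ∀ i, ContinuousOn (fun p : ℝ × ℝ => F i p.1 p.2) (Ioo Tm Tp ×ˢ univ) := by
    intro i
    have c0 := hα.continuousOn
    have c1 := hU.continuousOn
    have c2 := hφ.continuousOn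
    have cn : ∀ f, SmoothOn Tm Tp f →
        ContinuousOn (fun p : ℝ × ℝ => nullDer (ε i) G.α f p.1 p.2) (Ioo Tm Tp ×ˢ univ) := by
      intro f hf
      have c3 := hf.pt.continuousOn
      have c4 := hf.pth.continuousOn
      simp only [nullDer]
      fun_prop
    have d1 := cn _ hU
    have d2 := cn _ hA
    have d3 := cn _ hφ
    have d4 := cn _ hσ
    have d5 : ContinuousOn (fun p : ℝ × ℝ => exp (4 * G.U p.1 p.2) / (4 * p.1 ^ 2))
        (Ioo Tm Tp ×ˢ univ) := by
      refine ContinuousOn.div (by fun_prop) (by fun_prop) ?_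
      intro p hp
      have : 0 < p.1 := hTm.trans hp.1.1
      positivity
    simp only [F, nullE]
    fun_prop
  have hper : ∀ i t, Function.Periodic (F i t) (2 * π) := by
    intro i t θ
    simp only [F, nullE, nullDer, pα, pU, pφ, periodic_pt pU, periodic_pt pA,
      periodic_pt pφ, periodic_pt pσ, periodic_pth pU, periodic_pth pA, periodic_pth pφ,
      periodic_pth pσ]
  set L := C + 2 / Tm + C / Tm / 2 * (1 + |lam|) with hLdef
  have hC0 : 0 ≤ C := (abs_nonneg _).trans (hC t_i ⟨hti, hTp⟩ 0)
  have hL : 0 ≤ L := by positivity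
  -- at a spatial maximum the `θ`-derivative vanishes, so the transport equation bounds `∂ₜ`
  have hder : ∀ i, ∀ t ∈ Ioo Tm Tp, ∀ θ M, (∀ j θ', F j t θ' ≤ M) → F i t θ = M →
      ∃ d, HasDerivAt (fun s => F i s θ) d t ∧ |d| ≤ L * (1 + M) := by
    intro i t ht θ M hle heq
    obtain ⟨D₁, D₂, h₁, h₂, h⟩ := nullE_deriv (hε i) hTm hα hU hA hφ hσ G.sys ht θ
    have hD₂ : D₂ = 0 := by
      have hmax : IsLocalMax (fun x => nullE lam (ε i) G.α G.U G.A G.φ G.σ t x) θ :=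
        Eventually.of_forall fun x => (hle i x).trans heq.ge
      exact hmax.hasDerivAt_eq_zero h₂
    refine ⟨D₁, h₁, ?_⟩
    rw [hD₂, mul_zero, sub_zero, hεneg] at h
    rw [h]
    exact rhs_bound hTm ht.1.le (hC t ht θ) (by positivity) (by positivity) (hle i θ)
      (hle (!i) θ)
  obtain ⟨C₁, hC₁⟩ := maximum_principle F (a := t_i) (b := Tp) hL
    (fun i => (hcont i).mono (prod_mono (Ico_subset_Ioo_left hti) subset_rfl)) hper
    (fun i t ht θ M h h' => by
      obtain ⟨d, hd, hd'⟩ := hder i t ⟨hti.trans ht.1, ht.2⟩ θ M h h'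
      exact ⟨d, hd, (le_abs_self d).trans hd'⟩)
  -- the past of `t_i` is the future of `-t_i` after reversing time
  obtain ⟨C₂, hC₂⟩ := maximum_principle (fun i t => F i (-t)) (a := -t_i) (b := -Tm) hL
    (fun i => (hcont i).comp (f := fun p : ℝ × ℝ => (-p.1, p.2)) (by fun_prop)
      (fun p hp => ⟨⟨by linarith [hp.1.2], by linarith [hp.1.1]⟩, mem_univ _⟩))
    (fun i t => hper i (-t))
    (fun i t ht θ M h h' => by
      obtain ⟨d, hd, hd'⟩ := hder i (-t) ⟨by linarith [ht.2], by linarith [ht.1]⟩ θ M h h'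
      exact ⟨-d, (hd.comp t (hasDerivAt_neg t)).congr_deriv (by ring), (neg_le_abs d).trans hd'⟩)
  have hall : ∀ i, ∀ t ∈ Ioo Tm Tp, ∀ θ, F i t θ ≤ max C₁ C₂ := by
    intro i t ht θ
    rcases le_total t_i t with h | h
    · exact (hC₁ i t ⟨h, ht.2⟩ θ).trans (le_max_left _ _)
    · have := hC₂ i (-t) ⟨by linarith, by linarith [ht.1]⟩ θ
      simp only [neg_neg] at this
      exact this.trans (le_max_right _ _)
  refine ⟨max C₁ C₂, fun t ht θ => ?_⟩
  have h0 := calE_eq lam G.α G.U G.A G.φ G.σ t θ (G.sys.alpha_pos t ht θ)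
  have h1 := hall true t ht θ
  have h2 := hall false t ht θ
  have h3 := hnn true t θ
  have h4 := hnn false t θ
  simp only [F, ε, if_true, Bool.false_eq_true, if_false] at h1 h2 h3 h4
  rw [abs_le]
  constructor <;> linarith

end
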